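/- arXiv:1901.11029 — 2 statements merged into one kernel-verified Lean document; each statement's English description precedes it below -/
import Mathlib

section
/- For every ρ ≥ 1, the function g(r) := (1 − r)/(1 − tanh(ρ·artanh(r))) is monotone nondecreasing on the interval (0, 1): for all 0 < r₁ ≤ r₂ < 1, g(r₁) ≤ g(r₂). -/
noncomputable section

/-- Inverse hyperbolic tangent: artanh x = (1/2)·ln((1+x)/(1−x)). -/
def artanh (x : ℝ) : ℝ := (1/2) * Real.log ((1 + x) / (1 - x))

/-!
Put `r = tanh t`, so that `r ≤ r'` becomes `t ≤ t'`. Since `1 - tanh x = exp (-x) / cosh x`, the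
ratio equals `exp ((ρ - 1) * t) * (cosh (ρ * t) / cosh t)`. Both factors increase on `t ≥ 0`. For
the second one, the product-to-sum formula turns `cosh (b * s) * cosh (a * t)` into values of `cosh`
at `b * s ± a * t`, and
`(b * t ± a * s) ^ 2 - (b * s ± a * t) ^ 2 = (b ^ 2 - a ^ 2) * (t ^ 2 - s ^ 2)`.
-/

theorem artanh_eq_real_artanh {x : ℝ} (hx : x ∈ Set.Icc (-1) 1) : artanh x = Real.artanh x :=
  (Real.artanh_eq_half_log hx).symm

theorem tanh_artanh {x : ℝ} (hx : x ∈ Set.Ioo (-1) 1) : Real.tanh (artanh x) = x := by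
  rw [artanh_eq_real_artanh (Set.Ioo_subset_Icc_self hx), Real.tanh_artanh hx]

theorem monotoneOn_artanh : MonotoneOn artanh (Set.Ioo (-1) 1) :=
  Real.strictMonoOn_artanh.monotoneOn.congr fun _ hx ↦
    (artanh_eq_real_artanh (Set.Ioo_subset_Icc_self hx)).symm

theorem artanh_nonneg {x : ℝ} (hx : x ∈ Set.Icc 0 1) : 0 ≤ artanh x := by
  rw [artanh_eq_real_artanh ⟨by linarith [hx.1], hx.2⟩]
  exact Real.artanh_nonneg hx.1

theorem two_mul_cosh_mul_cosh (x y : ℝ) :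
    2 * (Real.cosh x * Real.cosh y) = Real.cosh (x + y) + Real.cosh (x - y) := by
  rw [Real.cosh_add, Real.cosh_sub]
  ring

theorem one_sub_tanh (x : ℝ) : 1 - Real.tanh x = Real.exp (-x) / Real.cosh x := by
  rw [Real.tanh_eq_sinh_div_cosh, one_sub_div (Real.cosh_pos x).ne', Real.cosh_sub_sinh]

theorem one_sub_tanh_div_one_sub_tanh (x y : ℝ) :
    (1 - Real.tanh x) / (1 - Real.tanh y) =
      Real.exp (y - x) * (Real.cosh y / Real.cosh x) := by
  rw [one_sub_tanh, one_sub_tanh, div_div_div_eq, mul_comm (Real.cosh x), mul_div_mul_comm,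
    ← Real.exp_sub, neg_sub_neg]

theorem cosh_mul_cosh_le_cosh_mul_cosh {a b s t : ℝ} (hab : |a| ≤ |b|) (hst : |s| ≤ |t|) :
    Real.cosh (b * s) * Real.cosh (a * t) ≤ Real.cosh (b * t) * Real.cosh (a * s) := by
  have hsq : 0 ≤ (b ^ 2 - a ^ 2) * (t ^ 2 - s ^ 2) :=
    mul_nonneg (sub_nonneg.2 (sq_le_sq.2 hab)) (sub_nonneg.2 (sq_le_sq.2 hst))
  have hadd : Real.cosh (b * s + a * t) ≤ Real.cosh (b * t + a * s) :=
    Real.cosh_le_cosh.2 (sq_le_sq.1 (by linarith))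
  have hsub : Real.cosh (b * s - a * t) ≤ Real.cosh (b * t - a * s) :=
    Real.cosh_le_cosh.2 (sq_le_sq.1 (by linarith))
  linarith [two_mul_cosh_mul_cosh (b * s) (a * t), two_mul_cosh_mul_cosh (b * t) (a * s)]

theorem monotoneOn_cosh_mul_div_cosh_mul {a b : ℝ} (hab : |a| ≤ |b|) :
    MonotoneOn (fun t ↦ Real.cosh (b * t) / Real.cosh (a * t)) (Set.Ici 0) := by
  intro s hs t _ hst
  rw [div_le_div_iff₀ (Real.cosh_pos _) (Real.cosh_pos _)]
  exact cosh_mul_cosh_le_cosh_mul_cosh hab (abs_le_abs_of_nonneg hs hst)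

theorem monotoneOn_one_sub_tanh_mul_div_one_sub_tanh_mul {a b : ℝ} (hab : |a| ≤ b) :
    MonotoneOn (fun t ↦ (1 - Real.tanh (a * t)) / (1 - Real.tanh (b * t))) (Set.Ici 0) := by
  have hexp : Monotone fun t ↦ Real.exp (b * t - a * t) := by
    simp only [← sub_mul]
    exact Real.exp_monotone.comp
      (monotone_id.const_mul (sub_nonneg.2 ((le_abs_self a).trans hab)))
  have hcosh := monotoneOn_cosh_mul_div_cosh_mul (hab.trans (le_abs_self b))
  simp only [one_sub_tanh_div_one_sub_tanh]
  exact (hexp.monotoneOn _).mul hcosh (fun _ _ ↦ by positivity) (fun _ _ ↦ by positivity)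

/-- For `ρ ≥ 1`, the function `r ↦ (1 − r)/(1 − tanh(ρ·artanh r))` is monotone
nondecreasing on `(0, 1)`. -/
theorem boundary_ratio_monotone (ρ : ℝ) (hρ : 1 ≤ ρ) :
    ∀ r₁ r₂ : ℝ, 0 < r₁ → r₁ ≤ r₂ → r₂ < 1 →
      (1 - r₁) / (1 - Real.tanh (ρ * artanh r₁))
        ≤ (1 - r₂) / (1 - Real.tanh (ρ * artanh r₂)) := by
  intro r₁ r₂ hr₁ hr hr₂
  have hmem₁ : r₁ ∈ Set.Ioo (-1) 1 := ⟨by linarith, by linarith⟩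
  have hmem₂ : r₂ ∈ Set.Ioo (-1) 1 := ⟨by linarith, hr₂⟩
  have hartanh : artanh r₁ ≤ artanh r₂ := monotoneOn_artanh hmem₁ hmem₂ hr
  have hnonneg : 0 ≤ artanh r₁ := artanh_nonneg ⟨hr₁.le, hmem₁.2.le⟩
  have hratio := monotoneOn_one_sub_tanh_mul_div_one_sub_tanh_mul (abs_one.trans_le hρ)
    hnonneg (hnonneg.trans hartanh) hartanh
  simpa only [one_mul, tanh_artanh hmem₁, tanh_artanh hmem₂] using hratio
end
end

section
/- In the genus-2 surface group G (the quotient of the free group on a₁, b₁, a₂, b₂ by the normal closure of the relator a₁b₁a₁⁻¹b₁⁻¹a₂b₂a₂⁻¹b₂⁻¹), with γ := a₂⁻¹b₁a₁b₁⁻¹, there exists a group automorphism φ of G with φ(a₁) = a₁, φ(b₁) = γ⁻¹·b₁, φ(a₂) = γ⁻¹·a₂·γ, and φ(b₂) = b₂·γ. -/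
/-- The genus-2 surface relator `a₁b₁a₁⁻¹b₁⁻¹a₂b₂a₂⁻¹b₂⁻¹` in the free group on
four generators `a₁ = 0, b₁ = 1, a₂ = 2, b₂ = 3`. -/
def surfaceRelator₂ : FreeGroup (Fin 4) :=
  FreeGroup.of 0 * FreeGroup.of 1 * (FreeGroup.of 0)⁻¹ * (FreeGroup.of 1)⁻¹ *
    FreeGroup.of 2 * FreeGroup.of 3 * (FreeGroup.of 2)⁻¹ * (FreeGroup.of 3)⁻¹

/-- The genus-2 surface group `π₁(Σ₂)`, presented with the single relator
`a₁b₁a₁⁻¹b₁⁻¹a₂b₂a₂⁻¹b₂⁻¹`. -/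
abbrev SurfaceGroup₂ : Type := PresentedGroup ({surfaceRelator₂} : Set (FreeGroup (Fin 4)))

namespace SurfaceGroup₂

/-- The generator `a₁`. -/
def a₁ : SurfaceGroup₂ := PresentedGroup.of 0
/-- The generator `b₁`. -/
def b₁ : SurfaceGroup₂ := PresentedGroup.of 1
/-- The generator `a₂`. -/
def a₂ : SurfaceGroup₂ := PresentedGroup.of 2
/-- The generator `b₂`. -/
def b₂ : SurfaceGroup₂ := PresentedGroup.of 3

/-- The separating curve `γ = a₂⁻¹b₁a₁b₁⁻¹` between the two handles. -/
def γ : SurfaceGroup₂ := a₂⁻¹ * b₁ * a₁ * b₁⁻¹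
/-- The loop `δ = b₂b₁` encircling both holes. -/
def δ : SurfaceGroup₂ := b₂ * b₁
/-- The loop `ta₂ = b₂a₂b₂⁻¹`, i.e. `a₂` transported along `b₂`. -/
def ta₂ : SurfaceGroup₂ := b₂ * a₂ * b₂⁻¹

end SurfaceGroup₂

open SurfaceGroup₂

/-!
In any group put `c = z⁻¹yxy⁻¹`; then `[x, y][z, w] = x c⁻¹ (w z⁻¹ w⁻¹)`. The substitution
`y ↦ t⁻¹y`, `z ↦ t⁻¹zt`, `w ↦ wt` conjugates `c` by `t` and fixes both `x` and `w z⁻¹ w⁻¹`, so it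
preserves the surface relator as soon as `t` commutes with `c`. With `t = γⁿ` this gives
endomorphisms of the surface group which fix `γ` and therefore compose by adding exponents; the one
for `n = 1` is invertible, with inverse the one for `n = -1`.
-/

open scoped commutatorElement

theorem commutatorElement_mul_commutatorElement_twist {G : Type*} [Group G] {x y z t : G}
    (ht : Commute t (z⁻¹ * y * x * y⁻¹)) (w : G) :
    ⁅x, t⁻¹ * y⁆ * ⁅t⁻¹ * z * t, w * t⁆ = ⁅x, y⁆ * ⁅z, w⁆ := by
  have conj_eq : t⁻¹ * (z⁻¹ * y * x * y⁻¹)⁻¹ * t = (z⁻¹ * y * x * y⁻¹)⁻¹ := by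
    rw [mul_assoc, ← ht.inv_right.eq, inv_mul_cancel_left]
  calc ⁅x, t⁻¹ * y⁆ * ⁅t⁻¹ * z * t, w * t⁆
      = x * (t⁻¹ * (z⁻¹ * y * x * y⁻¹)⁻¹ * t) * (w * z⁻¹ * w⁻¹) := by
        simp only [commutatorElement_def]; group
    _ = x * (z⁻¹ * y * x * y⁻¹)⁻¹ * (w * z⁻¹ * w⁻¹) := by rw [conj_eq]
    _ = ⁅x, y⁆ * ⁅z, w⁆ := by simp only [commutatorElement_def]; group

namespace SurfaceGroup₂

theorem commutatorElement_mul_commutatorElement_eq_one : ⁅a₁, b₁⁆ * ⁅a₂, b₂⁆ = 1 :=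
  calc ⁅a₁, b₁⁆ * ⁅a₂, b₂⁆
      = a₁ * b₁ * a₁⁻¹ * b₁⁻¹ * a₂ * b₂ * a₂⁻¹ * b₂⁻¹ := by
        simp only [commutatorElement_def, mul_assoc]
    _ = PresentedGroup.mk {surfaceRelator₂} surfaceRelator₂ := rfl
    _ = 1 := PresentedGroup.one_of_mem (Set.mem_singleton _)

section UniversalProperty

variable {H : Type*} [Group H]

/-- The universal property of the surface group: the homomorphism sending `a₁, b₁, a₂, b₂` to
`x, y, z, w`, which exists because these satisfy the surface relation. -/
def lift (x y z w : H) (h : ⁅x, y⁆ * ⁅z, w⁆ = 1) : SurfaceGroup₂ →* H :=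
  PresentedGroup.toGroup (f := ![x, y, z, w]) <| by
    rintro _ rfl
    simpa [surfaceRelator₂, commutatorElement_def, mul_assoc] using h

variable {x y z w : H} (h : ⁅x, y⁆ * ⁅z, w⁆ = 1)

@[simp]
theorem lift_a₁ : lift x y z w h a₁ = x := PresentedGroup.toGroup.of _

@[simp]
theorem lift_b₁ : lift x y z w h b₁ = y := PresentedGroup.toGroup.of _

@[simp]
theorem lift_a₂ : lift x y z w h a₂ = z := PresentedGroup.toGroup.of _

@[simp]
theorem lift_b₂ : lift x y z w h b₂ = w := PresentedGroup.toGroup.of _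

theorem hom_ext {f g : SurfaceGroup₂ →* H} (ha₁ : f a₁ = g a₁)
    (hb₁ : f b₁ = g b₁) (ha₂ : f a₂ = g a₂) (hb₂ : f b₂ = g b₂) : f = g :=
  PresentedGroup.ext fun i ↦ by
    fin_cases i
    exacts [ha₁, hb₁, ha₂, hb₂]

end UniversalProperty

/-- The `n`-th power of the Dehn twist along `γ`, as an endomorphism of the surface group. Allowing
`n : ℤ` covers the twist and its inverse at once. -/
def twistHom (n : ℤ) : SurfaceGroup₂ →* SurfaceGroup₂ :=
  lift a₁ ((γ ^ n)⁻¹ * b₁) ((γ ^ n)⁻¹ * a₂ * γ ^ n) (b₂ * γ ^ n) <|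
    (commutatorElement_mul_commutatorElement_twist (Commute.zpow_self γ n) b₂).trans
      commutatorElement_mul_commutatorElement_eq_one

@[simp]
theorem twistHom_a₁ (n : ℤ) : twistHom n a₁ = a₁ := lift_a₁ _

@[simp]
theorem twistHom_b₁ (n : ℤ) : twistHom n b₁ = (γ ^ n)⁻¹ * b₁ := lift_b₁ _

@[simp]
theorem twistHom_a₂ (n : ℤ) : twistHom n a₂ = (γ ^ n)⁻¹ * a₂ * γ ^ n := lift_a₂ _

@[simp]
theorem twistHom_b₂ (n : ℤ) : twistHom n b₂ = b₂ * γ ^ n := lift_b₂ _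

@[simp]
theorem twistHom_γ (n : ℤ) : twistHom n γ = γ :=
  calc twistHom n γ
      = (twistHom n a₂)⁻¹ * twistHom n b₁ * twistHom n a₁ * (twistHom n b₁)⁻¹ := by
        simp only [γ, map_mul, map_inv]
    _ = (γ ^ n)⁻¹ * (a₂⁻¹ * b₁ * a₁ * b₁⁻¹) * γ ^ n := by
        simp only [twistHom_a₁, twistHom_b₁, twistHom_a₂]; group
    _ = (γ ^ n)⁻¹ * γ * γ ^ n := rfl
    _ = γ := by group

theorem twistHom_zero : twistHom 0 = MonoidHom.id SurfaceGroup₂ := by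
  apply hom_ext <;> simp

theorem twistHom_comp_twistHom (m n : ℤ) :
    (twistHom m).comp (twistHom n) = twistHom (m + n) := by
  apply hom_ext <;> simp [zpow_add, mul_assoc]

/-- The automorphism of the surface group induced by the Dehn twist along `γ`. -/
def dehnTwist : SurfaceGroup₂ ≃* SurfaceGroup₂ :=
  (twistHom 1).toMulEquiv (twistHom (-1))
    (by rw [twistHom_comp_twistHom, neg_add_cancel, twistHom_zero])
    (by rw [twistHom_comp_twistHom, add_neg_cancel, twistHom_zero])

theorem dehnTwist_apply (g : SurfaceGroup₂) : dehnTwist g = twistHom 1 g := rfl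

end SurfaceGroup₂

/-- The Dehn twist `D_γ` acts on `π₁(Σ₂)` as an automorphism fixing `a₁`,
sending `b₁ ↦ γ⁻¹b₁`, `a₂ ↦ γ⁻¹a₂γ`, and `b₂ ↦ b₂γ`. -/
theorem dehn_twist_gamma_automorphism :
    ∃ φ : SurfaceGroup₂ ≃* SurfaceGroup₂,
      φ a₁ = a₁ ∧ φ b₁ = γ⁻¹ * b₁ ∧ φ a₂ = γ⁻¹ * a₂ * γ ∧ φ b₂ = b₂ * γ := by
  refine ⟨dehnTwist, ?_, ?_, ?_, ?_⟩ <;> simp [dehnTwist_apply]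
end
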